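/- Let d ≥ 2, let X be an ℝ^d-valued random vector with E‖X‖² < ∞ whose law has no atoms and is not supported on any line, and let u be a unit vector in ℝ^d. For each α ∈ (0,1) let q(α) denote the (unique) geometric quantile q_X(αu), i.e. the minimizer of f_{αu}. Let Σ be the covariance matrix of X. Then, as α → 1⁻, the ℝ^d-valued quantity ‖q(α)‖·( q(α) − ‖q(α)‖·u − E[X − ⟨X,u⟩u] ) converges to −(1/2)·‖E[X − ⟨X,u⟩u]‖²·u + (Σu − ⟨Σu,u⟩·u). -/

import Mathlib

/-!
The minimizer `q = q(α)` satisfies the first-order condition `E[N] = αu`, where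
`N = (q - X)/‖q - X‖`; absence of atoms makes the objective differentiable at every point.
Since the law is not carried by a line, `q ↦ ⟨E[(q - X)/‖q - X‖], u⟩` is a continuous function
with values `< 1`, so on every ball it stays away from `1`, and hence `r = ‖q(α)‖ → ∞`.

Put `D = r - ‖q - X‖`, so that `|D| ≤ ‖X‖`. Everything follows from the exact identity
`r N = q - X + D N`, which never divides by `‖q - X‖` (the expectation of `1/‖q - X‖` may be
infinite). It gives `‖N - q/r‖ ≤ 2‖X‖/r`, and therefore `q/r → u`, `N → u` and, by convexity of
the norm, `D → ⟨X, u⟩` pointwise. Let `P` be the orthogonal projection onto `u^⊥`. Taking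
expectations of `P` applied to the identity, and using `P E[N] = 0`,

* `Pq = P E[X] - E[D PN] → P E[X]`,
* `r (Pq - P E[X]) = -E[D P(q - X + D N)] → E[⟨X, u⟩ P(X - E[X])] = P Σ u`,

both by dominated convergence. The component along `u` is elementary:
`r (⟨q, u⟩ - r) = -‖Pq‖² / (⟨q/r, u⟩ + 1) → -‖P E[X]‖² / 2`.
-/

open MeasureTheory Filter
open scoped RealInnerProductSpace ProbabilityTheory

/-- The objective function defining geometric quantiles:
`f_{αu}(q) = E[‖X−q‖ − ‖X‖] − α⟨u,q⟩`. -/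
noncomputable def gqObj {d : ℕ} {Ω : Type*} [MeasureSpace Ω]
    (X : Ω → EuclideanSpace ℝ (Fin d)) (α : ℝ)
    (u q : EuclideanSpace ℝ (Fin d)) : ℝ :=
  (∫ ω, (‖X ω - q‖ - ‖X ω‖)) - α * ⟪u, q⟫

/-- The mean vector `μ = E[X]`. -/
noncomputable def meanVec {d : ℕ} {Ω : Type*} [MeasureSpace Ω]
    (X : Ω → EuclideanSpace ℝ (Fin d)) : EuclideanSpace ℝ (Fin d) :=
  ∫ ω, X ω

/-- The covariance operator `Σ` of `X`, acting on a vector `v`: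
`Σ v = E[⟨X − μ, v⟩ (X − μ)]`, so that `⟨Σ v, w⟩ = E[⟨X−μ,v⟩⟨X−μ,w⟩]`. -/
noncomputable def covOp {d : ℕ} {Ω : Type*} [MeasureSpace Ω]
    (X : Ω → EuclideanSpace ℝ (Fin d)) (v : EuclideanSpace ℝ (Fin d)) :
    EuclideanSpace ℝ (Fin d) :=
  ∫ ω, ⟪X ω - meanVec X, v⟫ • (X ω - meanVec X)

/-! ### Directions, the norm along a divergent family, and projection onto `u^⊥` -/

section Deterministic

variable {E : Type*} [NormedAddCommGroup E] [InnerProductSpace ℝ E]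

/-- The direction `p / ‖p‖` of a vector, with value `0` at `p = 0`. -/
noncomputable def unitDir (p : E) : E := ‖p‖⁻¹ • p

lemma norm_unitDir_le (p : E) : ‖unitDir p‖ ≤ 1 := by
  rw [unitDir, norm_smul, norm_inv, norm_norm]
  exact inv_mul_le_one

lemma norm_smul_unitDir (p : E) : ‖p‖ • unitDir p = p := by
  by_cases h : p = 0
  · simp [h]
  · rw [unitDir, smul_smul, mul_inv_cancel₀ (norm_ne_zero_iff.2 h), one_smul]

lemma inner_unitDir_self (p : E) : ⟪unitDir p, p⟫ = ‖p‖ := by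
  rw [unitDir, real_inner_smul_left, real_inner_self_eq_norm_sq]
  by_cases h : ‖p‖ = 0
  · simp [h]
  · field_simp

lemma inner_unitDir_le (p x : E) : ⟪unitDir p, x⟫ ≤ ‖x‖ :=
  (real_inner_le_norm _ _).trans
    (mul_le_of_le_one_left (norm_nonneg _) (norm_unitDir_le p))

lemma continuousAt_unitDir {p : E} (hp : p ≠ 0) : ContinuousAt (unitDir : E → E) p :=
  (continuous_norm.continuousAt.inv₀ (norm_ne_zero_iff.2 hp)).smul continuousAt_id

omit [InnerProductSpace ℝ E] in
lemma abs_norm_sub_norm_sub_le (q x : E) : |‖q‖ - ‖q - x‖| ≤ ‖x‖ := by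
  simpa using abs_norm_sub_norm_le q (q - x)

lemma norm_smul_unitDir_sub (q x : E) :
    ‖q‖ • unitDir (q - x) = q - x + (‖q‖ - ‖q - x‖) • unitDir (q - x) := by
  rw [sub_smul, norm_smul_unitDir]; abel

lemma norm_mul_norm_unitDir_sub_le (q x : E) :
    ‖q‖ * ‖unitDir (q - x) - unitDir q‖ ≤ 2 * ‖x‖ := by
  have h : ‖q‖ • (unitDir (q - x) - unitDir q)
      = -x + (‖q‖ - ‖q - x‖) • unitDir (q - x) := by
    rw [smul_sub, norm_smul_unitDir_sub, norm_smul_unitDir]; abel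
  have h2 := congrArg norm h
  rw [norm_smul, norm_norm] at h2
  rw [h2]
  refine (norm_add_le _ _).trans ?_
  rw [norm_neg, norm_smul, Real.norm_eq_abs]
  nlinarith [abs_norm_sub_norm_sub_le q x, norm_unitDir_le (q - x), norm_nonneg x,
    abs_nonneg (‖q‖ - ‖q - x‖), norm_nonneg (unitDir (q - x))]

/-- Subgradient inequality for the norm, at `q - x`. -/
lemma inner_unitDir_sub_le (q x : E) : ⟪unitDir (q - x), x⟫ ≤ ‖q‖ - ‖q - x‖ := by
  have h1 := inner_unitDir_le (q - x) q
  have h2 := inner_unitDir_self (q - x)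
  rw [inner_sub_right] at h2
  linarith

/-- Subgradient inequality for the norm, at `q`. -/
lemma norm_sub_norm_sub_le_inner (q x : E) : ‖q‖ - ‖q - x‖ ≤ ⟪unitDir q, x⟫ := by
  have h1 := inner_unitDir_le q (q - x)
  have h2 := inner_unitDir_self q
  rw [inner_sub_right] at h1
  linarith

variable {ι : Type*} {l : Filter ι} {q : ι → E} {u : E}

lemma tendsto_unitDir_sub (hr : Tendsto (fun a => ‖q a‖) l atTop)
    (hv : Tendsto (fun a => unitDir (q a)) l (nhds u)) (x : E) :
    Tendsto (fun a => unitDir (q a - x)) l (nhds u) := by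
  have h : Tendsto (fun a => unitDir (q a - x) - unitDir (q a)) l (nhds 0) := by
    refine squeeze_zero_norm' ?_ (hr.const_div_atTop (2 * ‖x‖))
    filter_upwards [hr.eventually_gt_atTop 0] with a ha
    rw [le_div_iff₀ ha, mul_comm]
    exact norm_mul_norm_unitDir_sub_le _ _
  simpa using h.add hv

lemma tendsto_norm_sub_norm_sub (hr : Tendsto (fun a => ‖q a‖) l atTop)
    (hv : Tendsto (fun a => unitDir (q a)) l (nhds u)) (x : E) :
    Tendsto (fun a => ‖q a‖ - ‖q a - x‖) l (nhds ⟪u, x⟫) :=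
  tendsto_of_tendsto_of_tendsto_of_le_of_le
    ((tendsto_unitDir_sub hr hv x).inner tendsto_const_nhds)
    (hv.inner tendsto_const_nhds)
    (fun a => inner_unitDir_sub_le (q a) x) (fun a => norm_sub_norm_sub_le_inner (q a) x)

/-- The map `x ↦ x - ⟨u, x⟩ u`; for a unit vector `u`, the orthogonal projection onto `u^⊥`. -/
noncomputable def projPerp (u : E) : E →L[ℝ] E :=
  ContinuousLinearMap.id ℝ E - (innerSL ℝ u).smulRight u

lemma projPerp_apply (u x : E) : projPerp u x = x - ⟪x, u⟫ • u := by
  simp [projPerp, real_inner_comm]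

lemma projPerp_self (hu : ‖u‖ = 1) : projPerp u u = 0 := by
  simp [projPerp_apply, hu]

lemma norm_projPerp_sq (hu : ‖u‖ = 1) (x : E) :
    ‖projPerp u x‖ ^ 2 = ‖x‖ ^ 2 - ⟪x, u⟫ ^ 2 := by
  rw [projPerp_apply, norm_sub_sq_real, real_inner_smul_right, norm_smul, hu, Real.norm_eq_abs,
    mul_one, sq_abs]
  ring

/-- The component of the limit along `u`. -/
lemma tendsto_norm_mul_inner_sub (hu : ‖u‖ = 1) (hr : Tendsto (fun a => ‖q a‖) l atTop)
    (hv : Tendsto (fun a => unitDir (q a)) l (nhds u)) {m : E}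
    (hP : Tendsto (fun a => projPerp u (q a)) l (nhds m)) :
    Tendsto (fun a => ‖q a‖ * (⟪q a, u⟫ - ‖q a‖)) l (nhds (-(1 / 2) * ‖m‖ ^ 2)) := by
  have h1 : Tendsto (fun a => ⟪unitDir (q a), u⟫ + 1) l (nhds 2) := by
    have := (hv.inner (tendsto_const_nhds (x := u))).add_const (1 : ℝ)
    rw [real_inner_self_eq_norm_sq, hu] at this
    norm_num at this
    exact this
  have h2 := ((hP.norm.pow 2).neg.div h1 two_ne_zero)
  have e : -(1 / 2) * ‖m‖ ^ 2 = -‖m‖ ^ 2 / 2 := by ring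
  rw [e]
  refine h2.congr' ?_
  filter_upwards [hr.eventually_gt_atTop 0, h1.eventually_const_lt zero_lt_two] with a ha hb
  simp only [Pi.div_apply]
  rw [norm_projPerp_sq hu, div_eq_iff hb.ne']
  have e2 : ⟪q a, u⟫ = ‖q a‖ * ⟪unitDir (q a), u⟫ := by
    rw [← real_inner_smul_left, norm_smul_unitDir]
  rw [e2]; ring

end Deterministic

/-! ### The first-order condition and the asymptotics of quantiles -/

section Probabilistic

variable {d : ℕ} {Ω : Type*} [MeasureSpace Ω] [IsProbabilityMeasure (ℙ : Measure Ω)]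
  {X : Ω → EuclideanSpace ℝ (Fin d)}

omit [IsProbabilityMeasure (ℙ : Measure Ω)] in
lemma ae_ne_of_noAtoms (hX : Measurable X) (hatoms : NullSingletonClass (Measure.map X ℙ))
    (p : EuclideanSpace ℝ (Fin d)) : ∀ᵐ ω, X ω ≠ p := by
  have h : Measure.map X ℙ {p} = 0 := hatoms.measure_singleton p
  rw [Measure.map_apply hX (measurableSet_singleton p)] at h
  rw [ae_iff]
  simpa [Set.preimage] using h

omit [IsProbabilityMeasure (ℙ : Measure Ω)] in
lemma measurable_unitDir_sub (hX : Measurable X) (p : EuclideanSpace ℝ (Fin d)) :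
    Measurable (fun ω => unitDir (p - X ω)) := by
  unfold unitDir; fun_prop

lemma integrable_unitDir_sub (hX : Measurable X) (p : EuclideanSpace ℝ (Fin d)) :
    Integrable (fun ω => unitDir (p - X ω)) :=
  Integrable.of_bound (measurable_unitDir_sub hX p).aestronglyMeasurable 1
    (ae_of_all _ fun _ => norm_unitDir_le _)

/-- First-order condition for a minimizer of the objective. -/
lemma integral_unitDir_eq (hX : Measurable X) (hatoms : NullSingletonClass (Measure.map X ℙ))
    {α : ℝ} {u p : EuclideanSpace ℝ (Fin d)}
    (hp : ∀ p', gqObj X α u p ≤ gqObj X α u p') :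
    ∫ ω, unitDir (p - X ω) = α • u := by
  refine ext_inner_right ℝ fun w => ?_
  have key : HasDerivAt (fun t : ℝ => ∫ ω, (‖X ω - (p + t • w)‖ - ‖X ω‖))
      (∫ ω, ⟪unitDir (p - X ω), w⟫) 0 := by
    refine (hasDerivAt_integral_of_dominated_loc_of_lip (μ := ℙ) (s := Set.univ)
      (bound := fun _ => ‖w‖) (F := fun t ω => ‖X ω - (p + t • w)‖ - ‖X ω‖)
      Filter.univ_mem ?_ ?_ ?_ ?_ ?_ ?_).2
    · refine Eventually.of_forall fun t => Measurable.aestronglyMeasurable ?_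
      fun_prop
    · refine Integrable.of_bound (Measurable.aestronglyMeasurable (by fun_prop)) ‖p‖
        (ae_of_all _ fun ω => ?_)
      have := abs_norm_sub_norm_le (X ω - p) (X ω)
      simpa using this
    · exact ((integrable_unitDir_sub hX p).inner_const w).aestronglyMeasurable
    · refine ae_of_all _ fun ω => ?_
      refine LipschitzOnWith.of_dist_le_mul fun s _ t _ => ?_
      have := abs_norm_sub_norm_le (X ω - (p + s • w)) (X ω - (p + t • w))
      have e : (X ω - (p + s • w)) - (X ω - (p + t • w)) = (t - s) • w := by
        rw [sub_smul]; abel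
      rw [e, norm_smul] at this
      rw [Real.dist_eq, Real.dist_eq, abs_sub_comm s t]
      simpa [mul_comm] using this
    · exact integrable_const _
    · filter_upwards [ae_ne_of_noAtoms hX hatoms p] with ω hω
      have hne : p - X ω ≠ 0 := sub_ne_zero.2 hω.symm
      have h1 : HasDerivAt (fun t : ℝ => p + t • w - X ω) w 0 := by
        simpa using (((hasDerivAt_id (0 : ℝ)).smul_const w).const_add p).sub_const (X ω)
      have h2 := h1.norm_sq.sqrt (by simpa using hne)
      have h3 : HasDerivAt (fun t : ℝ => ‖X ω - (p + t • w)‖ - ‖X ω‖)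
          (2 * ⟪p - X ω, w⟫ / (2 * ‖p - X ω‖)) 0 := by
        simp only [Real.sqrt_sq (norm_nonneg _), zero_smul, add_zero] at h2
        simp only [norm_sub_rev (X ω)]
        exact h2.sub_const _
      have e : 2 * ⟪p - X ω, w⟫ / (2 * ‖p - X ω‖) = ⟪unitDir (p - X ω), w⟫ := by
        rw [unitDir, real_inner_smul_left]
        have := norm_ne_zero_iff.2 hne
        field_simp
      rwa [e] at h3
  have hmin : IsLocalMin (fun t : ℝ => (∫ ω, (‖X ω - (p + t • w)‖ - ‖X ω‖))
      - α * ⟪u, p + t • w⟫) 0 := by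
    refine Eventually.of_forall fun t => ?_
    simpa [gqObj] using hp (p + t • w)
  have hd2 : HasDerivAt (fun t : ℝ => α * ⟪u, p + t • w⟫) (α * ⟪u, w⟫) 0 := by
    have h1 : HasDerivAt (fun t : ℝ => α * (⟪u, p⟫ + t * ⟪u, w⟫)) (α * (1 * ⟪u, w⟫)) 0 :=
      (((hasDerivAt_id (0 : ℝ)).mul_const _).const_add _).const_mul α
    simpa [inner_add_right, real_inner_smul_right] using h1
  have h0 := hmin.hasDerivAt_eq_zero (key.sub hd2)
  have e : ∫ ω, ⟪unitDir (p - X ω), w⟫ = ⟪∫ ω, unitDir (p - X ω), w⟫ := by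
    simp_rw [real_inner_comm w]
    exact integral_inner (integrable_unitDir_sub hX p) w
  rw [real_inner_smul_left, ← e]
  linarith

lemma continuous_integral_unitDir (hX : Measurable X) (hatoms : NullSingletonClass (Measure.map X ℙ)) :
    Continuous (fun p => ∫ ω, unitDir (p - X ω)) := by
  refine continuous_iff_continuousAt.2 fun p => ?_
  refine continuousAt_of_dominated (bound := fun _ => 1)
    (Eventually.of_forall fun p => (measurable_unitDir_sub hX p).aestronglyMeasurable)
    (Eventually.of_forall fun p => ae_of_all _ fun ω => norm_unitDir_le _)
    (integrable_const _) ?_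
  filter_upwards [ae_ne_of_noAtoms hX hatoms p] with ω hω
  exact ContinuousAt.comp (g := unitDir) (continuousAt_unitDir (sub_ne_zero.2 hω.symm))
    (continuousAt_id.sub continuousAt_const)

/-- Equality would force `(p - X)/‖p - X‖ = u` almost surely, putting `X` on the line `p + ℝu`. -/
lemma inner_integral_unitDir_lt_one (hX : Measurable X)
    (hatoms : NullSingletonClass (Measure.map X ℙ))
    (hline : ¬ ∃ a b : EuclideanSpace ℝ (Fin d), ∀ᵐ ω, ∃ t : ℝ, X ω = a + t • b)
    {u : EuclideanSpace ℝ (Fin d)} (hu : ‖u‖ = 1) (p : EuclideanSpace ℝ (Fin d)) :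
    ⟪u, (∫ ω, unitDir (p - X ω) : EuclideanSpace ℝ (Fin d))⟫ < 1 := by
  have hint := (integrable_unitDir_sub hX p).const_inner (𝕜 := ℝ) u
  have hle : ∀ ω, ⟪u, unitDir (p - X ω)⟫ ≤ 1 := fun ω => by
    rw [real_inner_comm, ← hu]; exact inner_unitDir_le _ _
  rw [← integral_inner (integrable_unitDir_sub hX p) u]
  by_contra! hcon
  apply hline
  refine ⟨p, u, ?_⟩
  have hz : ∫ ω, (1 - ⟪u, unitDir (p - X ω)⟫) = 0 := by
    refine le_antisymm ?_ (integral_nonneg fun ω => sub_nonneg.2 (hle ω))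
    rw [integral_sub (integrable_const _) hint]
    simpa using hcon
  rw [integral_eq_zero_iff_of_nonneg (fun ω => sub_nonneg.2 (hle ω))
    ((integrable_const _).sub hint)] at hz
  filter_upwards [hz, ae_ne_of_noAtoms hX hatoms p] with ω hω hne
  have hone : ⟪u, unitDir (p - X ω)⟫ = 1 := by
    have : 1 - ⟪u, unitDir (p - X ω)⟫ = 0 := hω
    linarith
  have hn : ‖unitDir (p - X ω)‖ = 1 := by
    rw [unitDir, norm_smul, norm_inv, norm_norm,
      inv_mul_cancel₀ (norm_ne_zero_iff.2 (sub_ne_zero.2 hne.symm))]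
  have hequ : u = unitDir (p - X ω) := (inner_eq_one_iff_of_norm_eq_one hu hn).1 hone
  refine ⟨-‖p - X ω‖, ?_⟩
  have := norm_smul_unitDir (p - X ω)
  rw [← hequ] at this
  rw [neg_smul, this]; abel

lemma tendsto_norm_quantile_atTop (hX : Measurable X) (hatoms : NullSingletonClass (Measure.map X ℙ))
    (hline : ¬ ∃ a b : EuclideanSpace ℝ (Fin d), ∀ᵐ ω, ∃ t : ℝ, X ω = a + t • b)
    {u : EuclideanSpace ℝ (Fin d)} (hu : ‖u‖ = 1) {q : ℝ → EuclideanSpace ℝ (Fin d)}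
    (hfo : ∀ α ∈ Set.Ioo (0 : ℝ) 1, ∫ ω, unitDir (q α - X ω) = α • u) :
    Tendsto (fun α => ‖q α‖) (nhdsWithin 1 (Set.Iio 1)) atTop := by
  refine tendsto_atTop.2 fun R => ?_
  have hc : Continuous fun p => ⟪u, (∫ ω, unitDir (p - X ω) : EuclideanSpace ℝ (Fin d))⟫ :=
    continuous_const.inner (continuous_integral_unitDir hX hatoms)
  have hIoo : Set.Ioo (0 : ℝ) 1 ∈ nhdsWithin (1 : ℝ) (Set.Iio 1) :=
    Ioo_mem_nhdsLT zero_lt_one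
  rcases (Metric.closedBall (0 : EuclideanSpace ℝ (Fin d)) R).eq_empty_or_nonempty with he | hne
  · refine Eventually.of_forall fun α => ?_
    have hR : R < 0 := by simpa using he
    exact hR.le.trans (norm_nonneg _)
  · obtain ⟨p₀, -, hp₀⟩ := (isCompact_closedBall (0 : EuclideanSpace ℝ (Fin d)) R).exists_isMaxOn
      hne hc.continuousOn
    have hlt := inner_integral_unitDir_lt_one hX hatoms hline hu p₀
    filter_upwards [hIoo, Ioo_mem_nhdsLT hlt] with α hα hα2
    by_contra! hcon
    have := hp₀ (show q α ∈ Metric.closedBall (0 : EuclideanSpace ℝ (Fin d)) R by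
      simpa using hcon.le)
    simp only [Set.mem_ofPred_eq, hfo α hα, real_inner_smul_right, real_inner_self_eq_norm_sq, hu]
      at this
    linarith [hα2.1]

lemma tendsto_unitDir_quantile (hX : Measurable X) (hint : Integrable X)
    {u : EuclideanSpace ℝ (Fin d)} {q : ℝ → EuclideanSpace ℝ (Fin d)}
    (hfo : ∀ α ∈ Set.Ioo (0 : ℝ) 1, ∫ ω, unitDir (q α - X ω) = α • u)
    (hr : Tendsto (fun α => ‖q α‖) (nhdsWithin 1 (Set.Iio 1)) atTop) :
    Tendsto (fun α => unitDir (q α)) (nhdsWithin 1 (Set.Iio 1)) (nhds u) := by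
  have hIoo : Set.Ioo (0 : ℝ) 1 ∈ nhdsWithin (1 : ℝ) (Set.Iio 1) :=
    Ioo_mem_nhdsLT zero_lt_one
  have h0 : Tendsto (fun α => α • u - unitDir (q α)) (nhdsWithin 1 (Set.Iio 1)) (nhds 0) := by
    refine squeeze_zero_norm' ?_ (hr.const_div_atTop (∫ ω, 2 * ‖X ω‖))
    filter_upwards [hIoo, hr.eventually_gt_atTop 0] with α hα hpos
    have e : α • u - unitDir (q α) = ∫ ω, (unitDir (q α - X ω) - unitDir (q α)) := by
      rw [integral_sub (integrable_unitDir_sub hX _) (integrable_const _), hfo α hα]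
      simp
    rw [e, le_div_iff₀ hpos, mul_comm]
    calc ‖q α‖ * ‖∫ ω, (unitDir (q α - X ω) - unitDir (q α))‖
        ≤ ‖q α‖ * ∫ ω, ‖unitDir (q α - X ω) - unitDir (q α)‖ := by
          gcongr; exact norm_integral_le_integral_norm _
      _ = ∫ ω, ‖q α‖ * ‖unitDir (q α - X ω) - unitDir (q α)‖ := (integral_const_mul _ _).symm
      _ ≤ ∫ ω, 2 * ‖X ω‖ := by
          refine integral_mono ?_ (hint.norm.const_mul 2) fun ω =>
            norm_mul_norm_unitDir_sub_le _ _
          exact (((integrable_unitDir_sub hX _).sub (integrable_const _)).norm).const_mul _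
  have h1 : Tendsto (fun α : ℝ => α • u) (nhdsWithin 1 (Set.Iio 1)) (nhds u) := by
    have : Tendsto (fun α : ℝ => α • u) (nhds 1) (nhds ((1 : ℝ) • u)) :=
      tendsto_id.smul_const u
    rw [one_smul] at this
    exact this.mono_left nhdsWithin_le_nhds
  simpa using h1.sub h0

omit [IsProbabilityMeasure (ℙ : Measure Ω)] in
lemma measurable_gap (hX : Measurable X) (p : EuclideanSpace ℝ (Fin d)) :
    Measurable (fun ω => ‖p‖ - ‖p - X ω‖) := by fun_prop

/-- Expectation of the identity `r N = q - X + D N` projected onto `u^⊥`. -/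
lemma projPerp_quantile_sub (hX : Measurable X) (hint : Integrable X)
    {u p : EuclideanSpace ℝ (Fin d)} (hu : ‖u‖ = 1) {α : ℝ}
    (hfo : ∫ ω, unitDir (p - X ω) = α • u) :
    projPerp u p - projPerp u (∫ ω, X ω)
      = -∫ ω, (‖p‖ - ‖p - X ω‖) • projPerp u (unitDir (p - X ω)) := by
  have hD : Integrable (fun ω => (‖p‖ - ‖p - X ω‖) • unitDir (p - X ω)) := by
    refine hint.norm.mono'
      ((measurable_gap hX p).smul (measurable_unitDir_sub hX p)).aestronglyMeasurable
      (ae_of_all _ fun ω => ?_)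
    rw [norm_smul, Real.norm_eq_abs]
    nlinarith [abs_norm_sub_norm_sub_le p (X ω), norm_unitDir_le (p - X ω),
      abs_nonneg (‖p‖ - ‖p - X ω‖), norm_nonneg (unitDir (p - X ω))]
  have h1 : ‖p‖ • (α • u)
      = p - (∫ ω, X ω) + ∫ ω, (‖p‖ - ‖p - X ω‖) • unitDir (p - X ω) := by
    rw [← hfo, ← integral_smul]
    simp_rw [norm_smul_unitDir_sub]
    have hpX : Integrable (fun ω => p - X ω) := (integrable_const p).sub hint
    rw [integral_add hpX hD, integral_sub (integrable_const _) hint]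
    simp
  have h2 := congrArg (projPerp u) h1
  simp only [map_smul, projPerp_self hu, smul_zero, map_add, map_sub] at h2
  rw [← ContinuousLinearMap.integral_comp_comm _ hD] at h2
  simp only [map_smul] at h2
  rw [eq_neg_iff_add_eq_zero]
  exact h2.symm

lemma tendsto_projPerp_quantile (hX : Measurable X) (hint : Integrable X)
    {u : EuclideanSpace ℝ (Fin d)} (hu : ‖u‖ = 1) {q : ℝ → EuclideanSpace ℝ (Fin d)}
    (hfo : ∀ α ∈ Set.Ioo (0 : ℝ) 1, ∫ ω, unitDir (q α - X ω) = α • u)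
    (hr : Tendsto (fun α => ‖q α‖) (nhdsWithin 1 (Set.Iio 1)) atTop)
    (hv : Tendsto (fun α => unitDir (q α)) (nhdsWithin 1 (Set.Iio 1)) (nhds u)) :
    Tendsto (fun α => projPerp u (q α)) (nhdsWithin 1 (Set.Iio 1))
      (nhds (projPerp u (∫ ω, X ω))) := by
  have hIoo : Set.Ioo (0 : ℝ) 1 ∈ nhdsWithin (1 : ℝ) (Set.Iio 1) :=
    Ioo_mem_nhdsLT zero_lt_one
  have h : Tendsto (fun α => ∫ ω, (‖q α‖ - ‖q α - X ω‖) • projPerp u (unitDir (q α - X ω)))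
      (nhdsWithin 1 (Set.Iio 1)) (nhds (∫ _ : Ω, (0 : EuclideanSpace ℝ (Fin d)))) := by
    refine tendsto_integral_filter_of_dominated_convergence
      (fun ω => ‖X ω‖ * (‖projPerp u‖ * 1)) (Eventually.of_forall fun α => ?_)
      (Eventually.of_forall fun α => ae_of_all _ fun ω => ?_) (hint.norm.mul_const _)
      (ae_of_all _ fun ω => ?_)
    · exact ((measurable_gap hX _).smul ((projPerp u).continuous.measurable.comp
        (measurable_unitDir_sub hX _))).aestronglyMeasurable
    · rw [norm_smul, Real.norm_eq_abs]
      gcongr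
      · exact abs_norm_sub_norm_sub_le _ _
      · exact (projPerp u).le_opNorm_of_le (norm_unitDir_le _)
    · have h1 := (tendsto_norm_sub_norm_sub hr hv (X ω)).smul
        (((projPerp u).continuous.tendsto u).comp (tendsto_unitDir_sub hr hv (X ω)))
      rw [projPerp_self hu, smul_zero] at h1
      exact h1
  rw [integral_zero] at h
  have h2 := (tendsto_const_nhds (x := projPerp u (∫ ω, X ω))).sub h
  rw [sub_zero] at h2
  refine h2.congr' ?_
  filter_upwards [hIoo] with α hα
  have e := projPerp_quantile_sub hX hint hu (hfo α hα)
  rw [sub_eq_iff_eq_add] at e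
  rw [e]; abel

lemma projPerp_covOp (hX : Measurable X) (hmom : Integrable (fun ω => ‖X ω‖ ^ 2))
    (hint : Integrable X) (u : EuclideanSpace ℝ (Fin d)) :
    projPerp u (covOp X u)
      = -∫ ω, ⟪u, X ω⟫ • (projPerp u (∫ ω, X ω) - projPerp u (X ω)) := by
  set m := ∫ ω, X ω with hm
  have hsm : ∀ a b : EuclideanSpace ℝ (Fin d),
      Integrable (fun ω => ⟪X ω - a, u⟫ • (X ω - b)) := by
    intro a b
    have hb : Integrable (fun ω => (‖X ω‖ ^ 2 + ‖X ω‖ * (‖a‖ + ‖b‖) + ‖a‖ * ‖b‖) * ‖u‖) :=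
      ((hmom.add (hint.norm.mul_const _)).add (integrable_const _)).mul_const _
    refine hb.mono' (Measurable.aestronglyMeasurable (by fun_prop)) (ae_of_all _ fun ω => ?_)
    rw [norm_smul]
    calc ‖⟪X ω - a, u⟫‖ * ‖X ω - b‖ ≤ ((‖X ω‖ + ‖a‖) * ‖u‖) * (‖X ω‖ + ‖b‖) := by
          gcongr
          · exact (norm_inner_le_norm _ _).trans (by gcongr; exact norm_sub_le _ _)
          · exact norm_sub_le _ _
      _ = _ := by ring
  have h1 : covOp X u = ∫ ω, ⟪X ω - 0, u⟫ • (X ω - m) := by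
    have e : ∀ ω, ⟪X ω - m, u⟫ • (X ω - m)
        = ⟪X ω - 0, u⟫ • (X ω - m) - ⟪m, u⟫ • (X ω - m) := fun ω => by
      rw [← sub_smul, sub_zero, inner_sub_left]
    rw [covOp, meanVec, ← hm]
    simp_rw [e]
    have hc : Integrable (fun ω => ⟪m, u⟫ • (X ω - m)) :=
      (hint.sub (integrable_const m)).smul ⟪m, u⟫
    rw [integral_sub (hsm 0 m) hc, integral_smul,
      integral_sub hint (integrable_const m), ← hm]
    simp
  rw [h1, ← ContinuousLinearMap.integral_comp_comm _ (hsm 0 m), ← integral_neg]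
  refine integral_congr_ae (ae_of_all _ fun ω => ?_)
  simp only [map_smul, map_sub, sub_zero, ← smul_neg, neg_sub, real_inner_comm]

/-- The component of the limit orthogonal to `u`. -/
lemma tendsto_norm_smul_projPerp_quantile_sub (hX : Measurable X)
    (hmom : Integrable (fun ω => ‖X ω‖ ^ 2)) (hint : Integrable X)
    {u : EuclideanSpace ℝ (Fin d)} (hu : ‖u‖ = 1) {q : ℝ → EuclideanSpace ℝ (Fin d)}
    (hfo : ∀ α ∈ Set.Ioo (0 : ℝ) 1, ∫ ω, unitDir (q α - X ω) = α • u)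
    (hr : Tendsto (fun α => ‖q α‖) (nhdsWithin 1 (Set.Iio 1)) atTop)
    (hv : Tendsto (fun α => unitDir (q α)) (nhdsWithin 1 (Set.Iio 1)) (nhds u)) :
    Tendsto (fun α => ‖q α‖ • (projPerp u (q α) - projPerp u (∫ ω, X ω)))
      (nhdsWithin 1 (Set.Iio 1)) (nhds (projPerp u (covOp X u))) := by
  have hIoo : Set.Ioo (0 : ℝ) 1 ∈ nhdsWithin (1 : ℝ) (Set.Iio 1) :=
    Ioo_mem_nhdsLT zero_lt_one
  have hPq := tendsto_projPerp_quantile hX hint hu hfo hr hv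
  rw [projPerp_covOp hX hmom hint u]
  set m := ∫ ω, X ω with hm
  have hbd : ∀ᶠ α in nhdsWithin 1 (Set.Iio 1), ‖projPerp u (q α)‖ < ‖projPerp u m‖ + 1 :=
    hPq.norm.eventually_lt_const (lt_add_one _)
  have h : Tendsto (fun α => ∫ ω, (‖q α‖ - ‖q α - X ω‖) • (projPerp u (q α) - projPerp u (X ω)
        + (‖q α‖ - ‖q α - X ω‖) • projPerp u (unitDir (q α - X ω))))
      (nhdsWithin 1 (Set.Iio 1))
      (nhds (∫ ω, ⟪u, X ω⟫ • (projPerp u m - projPerp u (X ω)))) := by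
    refine tendsto_integral_filter_of_dominated_convergence
      (fun ω => ‖X ω‖ * (‖projPerp u m‖ + 1) + ‖X ω‖ ^ 2 * (2 * ‖projPerp u‖))
      (Eventually.of_forall fun α => ?_) ?_
      ((hint.norm.mul_const _).add (hmom.mul_const _)) (ae_of_all _ fun ω => ?_)
    · have hP := (projPerp u).continuous.measurable
      exact ((measurable_gap hX _).smul ((measurable_const.sub (hP.comp hX)).add
        ((measurable_gap hX _).smul
          (hP.comp (measurable_unitDir_sub hX _))))).aestronglyMeasurable
    · filter_upwards [hbd] with α hα
      refine ae_of_all _ fun ω => ?_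
      have hD := abs_norm_sub_norm_sub_le (q α) (X ω)
      rw [norm_smul, Real.norm_eq_abs]
      calc |‖q α‖ - ‖q α - X ω‖| * ‖projPerp u (q α) - projPerp u (X ω)
              + (‖q α‖ - ‖q α - X ω‖) • projPerp u (unitDir (q α - X ω))‖
          ≤ ‖X ω‖ * ((‖projPerp u m‖ + 1) + ‖projPerp u‖ * ‖X ω‖
              + ‖X ω‖ * (‖projPerp u‖ * 1)) := by
            gcongr
            refine (norm_add_le _ _).trans ?_
            gcongr
            · refine (norm_sub_le _ _).trans ?_
              gcongr
              exact (projPerp u).le_opNorm _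
            · rw [norm_smul, Real.norm_eq_abs]
              gcongr
              exact (projPerp u).le_opNorm_of_le (norm_unitDir_le _)
        _ = _ := by ring
    · have hD := tendsto_norm_sub_norm_sub hr hv (X ω)
      have hN := ((projPerp u).continuous.tendsto u).comp (tendsto_unitDir_sub hr hv (X ω))
      rw [projPerp_self hu] at hN
      have h1 := hD.smul ((hPq.sub_const (projPerp u (X ω))).add (hD.smul hN))
      rw [smul_zero, add_zero] at h1
      exact h1
  refine h.neg.congr' ?_
  filter_upwards [hIoo] with α hα
  rw [projPerp_quantile_sub hX hint hu (hfo α hα), smul_neg, ← integral_smul]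
  congr 1
  refine integral_congr_ae (ae_of_all _ fun ω => ?_)
  have e := congrArg (projPerp u) (norm_smul_unitDir_sub (q α) (X ω))
  simp only [map_smul, map_add, map_sub] at e
  simp only
  rw [← e, smul_comm]

end Probabilistic

/-- Lemma A (rate of convergence for the direction of geometric quantiles): if
`E‖X‖² < ∞`, the law of `X` has no atoms and is not supported on a line, then as
`α → 1⁻`, `‖q(α)‖ (q(α) − ‖q(α)‖u − E[X − ⟨X,u⟩u])` converges in `ℝ^d` to
`−½‖E[X − ⟨X,u⟩u]‖² u + (Σu − ⟨Σu,u⟩u)`. -/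
theorem geometric_quantile_direction_rate
    {d : ℕ} (hd : 2 ≤ d)
    {Ω : Type*} [MeasureSpace Ω] [IsProbabilityMeasure (ℙ : Measure Ω)]
    (X : Ω → EuclideanSpace ℝ (Fin d)) (hX : Measurable X)
    (hmom : Integrable (fun ω => ‖X ω‖ ^ 2))
    (hatoms : NoAtoms (Measure.map X ℙ))
    (hline : ¬ ∃ a b : EuclideanSpace ℝ (Fin d),
      ∀ᵐ ω, ∃ t : ℝ, X ω = a + t • b)
    (u : EuclideanSpace ℝ (Fin d)) (hu : ‖u‖ = 1)
    (q : ℝ → EuclideanSpace ℝ (Fin d))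
    (hq : ∀ α ∈ Set.Ioo (0 : ℝ) 1,
      ∀ p : EuclideanSpace ℝ (Fin d), gqObj X α u (q α) ≤ gqObj X α u p) :
    Tendsto
      (fun α : ℝ => ‖q α‖ •
        (q α - ‖q α‖ • u - ∫ ω, (X ω - ⟪X ω, u⟫ • u)))
      (nhdsWithin 1 (Set.Iio 1))
      (nhds ((-(1 / 2) * ‖∫ ω, (X ω - ⟪X ω, u⟫ • u)‖ ^ 2) • u +
        (covOp X u - ⟪covOp X u, u⟫ • u))) := by
  have hint : Integrable X := by
    have h2 : MemLp X 2 ℙ :=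
      (memLp_two_iff_integrable_sq_norm hX.aestronglyMeasurable).2 hmom
    exact h2.integrable one_le_two
  have hfo : ∀ α ∈ Set.Ioo (0 : ℝ) 1, ∫ ω, unitDir (q α - X ω) = α • u :=
    fun α hα => integral_unitDir_eq hX hatoms (hq α hα)
  have hr := tendsto_norm_quantile_atTop hX hatoms hline hu hfo
  have hv := tendsto_unitDir_quantile hX hint hfo hr
  have hPq := tendsto_projPerp_quantile hX hint hu hfo hr hv
  have hPm : ∫ ω, (X ω - ⟪X ω, u⟫ • u) = projPerp u (∫ ω, X ω) := by
    rw [← ContinuousLinearMap.integral_comp_comm _ hint]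
    simp_rw [projPerp_apply]
  rw [hPm, ← projPerp_apply]
  have h := ((tendsto_norm_mul_inner_sub hu hr hv hPq).smul_const u).add
    (tendsto_norm_smul_projPerp_quantile_sub hX hmom hint hu hfo hr hv)
  refine h.congr fun α => ?_
  rw [mul_smul, ← smul_add, sub_smul, projPerp_apply u (q α)]
  congr 1
  abel
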